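/- Let k ≥ 1, 0 ≤ s ≤ k, and n ≥ 1 be integers. Suppose there exists a Gallai coloring of the complete graph on n vertices with colors from {1,...,k} containing no monochromatic copy of K4^+ in any color i ∈ {1,...,s} and no monochromatic copy of K3 in any color i ∈ {s+1,...,k}. Then there exists a Gallai coloring of the complete graph on 8n vertices with colors from {1,...,k+2} containing no monochromatic copy of K4^+ in any color i ∈ {1,...,s} ∪ {k+1} and no monochromatic copy of K3 in any color i ∈ {s+1,...,k} ∪ {k+2}. -/

import Mathlib

/-- A symmetric edge-coloring function on the complete graph on `Fin n`. -/
def IsSym {n : ℕ} {α : Type*} (c : Fin n → Fin n → α) : Prop :=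
  ∀ u v : Fin n, c u v = c v u

/-- A Gallai coloring: no triangle whose three edges get three distinct colors. -/
def NoRainbowTriangle {n : ℕ} {α : Type*} (c : Fin n → Fin n → α) : Prop :=
  ∀ u v w : Fin n, u ≠ v → u ≠ w → v ≠ w →
    c u v = c u w ∨ c u v = c v w ∨ c u w = c v w

/-- There is a monochromatic triangle in color `i`. -/
def HasMonoK3 {n : ℕ} {α : Type*} (c : Fin n → Fin n → α) (i : α) : Prop :=
  ∃ a b d : Fin n, a ≠ b ∧ a ≠ d ∧ b ≠ d ∧
    c a b = i ∧ c a d = i ∧ c b d = i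

/-- There is a monochromatic copy of `K₄⁺ = K₁ ∨ (K₃ + K₁)` in color `i`:
a vertex `x` joined to all of `a, b, d, e`, where `a b d` is a triangle
(equivalently `K₄` on `{x,a,b,d}` together with a pendant edge `x e`). -/
def HasMonoK4plus {n : ℕ} {α : Type*} (c : Fin n → Fin n → α) (i : α) : Prop :=
  ∃ x a b d e : Fin n,
    x ≠ a ∧ x ≠ b ∧ x ≠ d ∧ x ≠ e ∧ a ≠ b ∧ a ≠ d ∧ a ≠ e ∧ b ≠ d ∧ b ≠ e ∧ d ≠ e ∧
    c x a = i ∧ c x b = i ∧ c x d = i ∧ c x e = i ∧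
    c a b = i ∧ c a d = i ∧ c b d = i

/-!
Substitute the given coloring `c` into every vertex of a two-coloring `d` of `K₈`, using two new
colors. A triangle meeting exactly two blocks has two edges of the same color between them, and a
triangle meeting three blocks is a triangle of `d`, so no rainbow triangle arises. The palettes
being disjoint, a monochromatic connected graph in an old color lies inside one block, and a
monochromatic clique in a new color meets each block at most once, hence is a clique of `d`. Since
`K₄⁺` contains `K₄`, it suffices that `d` has no red `K₄` and no blue triangle: take the edges of
the Wagner graph, which is triangle-free with independence number three, to be blue.
-/

section Substitution

variable {m n : ℕ} {α : Type*} {d : Fin m → Fin m → α} {c : Fin n → Fin n → α} {i : α}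

/-- The blow-up of the coloring `d` in which each vertex is replaced by a copy of the coloring `c`.
The vertex `u` lies in the block `u.divNat`, where it is the copy of the vertex `u.modNat`. -/
def substitute (d : Fin m → Fin m → α) (c : Fin n → Fin n → α) (u v : Fin (m * n)) : α :=
  if u.divNat = v.divNat then c u.modNat v.modNat else d u.divNat v.divNat

/-- There is a monochromatic clique on four vertices in color `i`. -/
def HasMonoK4 (d : Fin m → Fin m → α) (i : α) : Prop :=
  ∃ t : Finset (Fin m), t.card = 4 ∧ (t : Set (Fin m)).Pairwise fun x y ↦ d x y = i

theorem substitute_of_divNat_eq {u v : Fin (m * n)} (h : u.divNat = v.divNat) :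
    substitute d c u v = c u.modNat v.modNat :=
  if_pos h

theorem substitute_of_divNat_ne {u v : Fin (m * n)} (h : u.divNat ≠ v.divNat) :
    substitute d c u v = d u.divNat v.divNat :=
  if_neg h

theorem modNat_ne_of_divNat_eq {u v : Fin (m * n)} (huv : u ≠ v) (h : u.divNat = v.divNat) :
    u.modNat ≠ v.modNat :=
  fun h' ↦ huv (finProdFinEquiv.symm.injective (Prod.ext h h'))

theorem isSym_substitute (hd : IsSym d) (hc : IsSym c) : IsSym (substitute d c) := by
  intro u v
  simp only [substitute, eq_comm (a := u.divNat), hd u.divNat, hc u.modNat]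

theorem substitute_mem {S : Set α} (hd : ∀ x y, x ≠ y → d x y ∈ S) (hc : ∀ x y, x ≠ y → c x y ∈ S)
    {u v : Fin (m * n)} (huv : u ≠ v) : substitute d c u v ∈ S := by
  by_cases h : u.divNat = v.divNat
  · rw [substitute_of_divNat_eq h]
    exact hc _ _ (modNat_ne_of_divNat_eq huv h)
  · rw [substitute_of_divNat_ne h]
    exact hd _ _ h

theorem noRainbowTriangle_substitute (hsym : IsSym d) (hd : NoRainbowTriangle d)
    (hc : NoRainbowTriangle c) : NoRainbowTriangle (substitute d c) := by
  intro u v w huv huw hvw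
  by_cases h₁ : u.divNat = v.divNat <;> by_cases h₂ : u.divNat = w.divNat
  · have h₃ : v.divNat = w.divNat := h₁.symm.trans h₂
    rw [substitute_of_divNat_eq h₁, substitute_of_divNat_eq h₂, substitute_of_divNat_eq h₃]
    exact hc _ _ _ (modNat_ne_of_divNat_eq huv h₁) (modNat_ne_of_divNat_eq huw h₂)
      (modNat_ne_of_divNat_eq hvw h₃)
  · refine .inr (.inr ?_)
    rw [substitute_of_divNat_ne h₂, substitute_of_divNat_ne (h₁ ▸ h₂), h₁]
  · refine .inr (.inl ?_)
    rw [substitute_of_divNat_ne h₁, substitute_of_divNat_ne (h₂ ▸ Ne.symm h₁), hsym, h₂]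
  · by_cases h₃ : v.divNat = w.divNat
    · refine .inl ?_
      rw [substitute_of_divNat_ne h₁, substitute_of_divNat_ne h₂, h₃]
    · rw [substitute_of_divNat_ne h₁, substitute_of_divNat_ne h₂, substitute_of_divNat_ne h₃]
      exact hd _ _ _ h₁ h₂ h₃

theorem divNat_eq_and_eq_of_substitute_eq (hd : ∀ x y, x ≠ y → d x y ≠ i) {u v : Fin (m * n)}
    (h : substitute d c u v = i) : u.divNat = v.divNat ∧ c u.modNat v.modNat = i := by
  by_cases hdiv : u.divNat = v.divNat
  · exact ⟨hdiv, (substitute_of_divNat_eq hdiv).symm.trans h⟩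
  · exact absurd ((substitute_of_divNat_ne hdiv).symm.trans h) (hd _ _ hdiv)

theorem divNat_ne_and_eq_of_substitute_eq (hc : ∀ x y, x ≠ y → c x y ≠ i) {u v : Fin (m * n)}
    (huv : u ≠ v) (h : substitute d c u v = i) :
    u.divNat ≠ v.divNat ∧ d u.divNat v.divNat = i := by
  by_cases hdiv : u.divNat = v.divNat
  · exact absurd ((substitute_of_divNat_eq hdiv).symm.trans h)
      (hc _ _ (modNat_ne_of_divNat_eq huv hdiv))
  · exact ⟨hdiv, (substitute_of_divNat_ne hdiv).symm.trans h⟩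

theorem HasMonoK3.inner_of_substitute (hd : ∀ x y, x ≠ y → d x y ≠ i)
    (h : HasMonoK3 (substitute d c) i) : HasMonoK3 c i := by
  obtain ⟨x, y, z, hxy, hxz, hyz, cxy, cxz, cyz⟩ := h
  obtain ⟨bxy, cxy⟩ := divNat_eq_and_eq_of_substitute_eq hd cxy
  obtain ⟨bxz, cxz⟩ := divNat_eq_and_eq_of_substitute_eq hd cxz
  obtain ⟨byz, cyz⟩ := divNat_eq_and_eq_of_substitute_eq hd cyz
  exact ⟨_, _, _, modNat_ne_of_divNat_eq hxy bxy, modNat_ne_of_divNat_eq hxz bxz,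
    modNat_ne_of_divNat_eq hyz byz, cxy, cxz, cyz⟩

theorem HasMonoK3.outer_of_substitute (hc : ∀ x y, x ≠ y → c x y ≠ i)
    (h : HasMonoK3 (substitute d c) i) : HasMonoK3 d i := by
  obtain ⟨x, y, z, hxy, hxz, hyz, cxy, cxz, cyz⟩ := h
  obtain ⟨bxy, dxy⟩ := divNat_ne_and_eq_of_substitute_eq hc hxy cxy
  obtain ⟨bxz, dxz⟩ := divNat_ne_and_eq_of_substitute_eq hc hxz cxz
  obtain ⟨byz, dyz⟩ := divNat_ne_and_eq_of_substitute_eq hc hyz cyz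
  exact ⟨_, _, _, bxy, bxz, byz, dxy, dxz, dyz⟩

theorem HasMonoK4plus.inner_of_substitute (hd : ∀ x y, x ≠ y → d x y ≠ i)
    (h : HasMonoK4plus (substitute d c) i) : HasMonoK4plus c i := by
  obtain ⟨x, y, z, w, e, hxy, hxz, hxw, hxe, hyz, hyw, hye, hzw, hze, hwe,
    cxy, cxz, cxw, cxe, cyz, cyw, czw⟩ := h
  obtain ⟨bxy, cxy⟩ := divNat_eq_and_eq_of_substitute_eq hd cxy
  obtain ⟨bxz, cxz⟩ := divNat_eq_and_eq_of_substitute_eq hd cxz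
  obtain ⟨bxw, cxw⟩ := divNat_eq_and_eq_of_substitute_eq hd cxw
  obtain ⟨bxe, cxe⟩ := divNat_eq_and_eq_of_substitute_eq hd cxe
  obtain ⟨byz, cyz⟩ := divNat_eq_and_eq_of_substitute_eq hd cyz
  obtain ⟨byw, cyw⟩ := divNat_eq_and_eq_of_substitute_eq hd cyw
  obtain ⟨bzw, czw⟩ := divNat_eq_and_eq_of_substitute_eq hd czw
  exact ⟨_, _, _, _, _, modNat_ne_of_divNat_eq hxy bxy, modNat_ne_of_divNat_eq hxz bxz,
    modNat_ne_of_divNat_eq hxw bxw, modNat_ne_of_divNat_eq hxe bxe,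
    modNat_ne_of_divNat_eq hyz byz, modNat_ne_of_divNat_eq hyw byw,
    modNat_ne_of_divNat_eq hye (bxy.symm.trans bxe), modNat_ne_of_divNat_eq hzw bzw,
    modNat_ne_of_divNat_eq hze (bxz.symm.trans bxe),
    modNat_ne_of_divNat_eq hwe (bxw.symm.trans bxe), cxy, cxz, cxw, cxe, cyz, cyw, czw⟩

theorem HasMonoK4plus.hasMonoK4 (hsym : IsSym d) (h : HasMonoK4plus d i) : HasMonoK4 d i := by
  obtain ⟨x, y, z, w, -, hxy, hxz, hxw, -, hyz, hyw, -, hzw, -, -,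
    dxy, dxz, dxw, -, dyz, dyw, dzw⟩ := h
  have : Std.Symm fun u v ↦ d u v = i := ⟨fun u v huv ↦ (hsym v u).trans huv⟩
  refine ⟨{x, y, z, w}, Finset.card_eq_four.2 ⟨x, y, z, w, hxy, hxz, hxw, hyz, hyw, hzw, rfl⟩, ?_⟩
  simp [Set.pairwise_insert_of_symm, dxy, dxz, dxw, dyz, dyw, dzw]

theorem HasMonoK4.outer_of_substitute (hc : ∀ x y, x ≠ y → c x y ≠ i)
    (h : HasMonoK4 (substitute d c) i) : HasMonoK4 d i := by
  obtain ⟨t, ht, hmono⟩ := h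
  have outer {u v} (hu : u ∈ t) (hv : v ∈ t) (huv : u ≠ v) :=
    divNat_ne_and_eq_of_substitute_eq hc huv (hmono hu hv huv)
  have hinj : Set.InjOn Fin.divNat (t : Set (Fin (m * n))) := fun u hu v hv ↦
    not_imp_not.1 fun huv ↦ (outer hu hv huv).1
  refine ⟨t.image Fin.divNat, (Finset.card_image_of_injOn hinj).trans ht, ?_⟩
  rw [Finset.coe_image, hinj.pairwise_image]
  exact fun u hu v hv huv ↦ (outer hu hv huv).2

end Substitution

section TwoColoring

variable {m : ℕ} {α : Type*}

theorem noRainbowTriangle_of_eq_or {c : Fin m → Fin m → α} {a b : α}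
    (h : ∀ x y, c x y = a ∨ c x y = b) : NoRainbowTriangle c := by
  intro x y z _ _ _
  grind

variable (G : SimpleGraph (Fin m)) [DecidableRel G.Adj] (red blue : α)

/-- The coloring of the complete graph in which the edges of `G` are blue and all others red. -/
def twoColoring (x y : Fin m) : α :=
  if G.Adj x y then blue else red

theorem isSym_twoColoring : IsSym (twoColoring G red blue) := by
  intro x y
  simp only [twoColoring, G.adj_comm x y]

theorem twoColoring_eq_or (x y : Fin m) :
    twoColoring G red blue x y = red ∨ twoColoring G red blue x y = blue :=
  (ite_eq_or_eq _ blue red).symm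

variable {G red blue}

theorem not_hasMonoK3_twoColoring (hne : red ≠ blue) (hG : G.CliqueFree 3) :
    ¬ HasMonoK3 (twoColoring G red blue) blue := by
  rintro ⟨x, y, z, -, -, -, hxy, hxz, hyz⟩
  have adj {u v} (h : twoColoring G red blue u v = blue) : G.Adj u v := by
    by_contra huv
    exact hne ((if_neg huv).symm.trans h)
  exact hG {x, y, z} (SimpleGraph.is3Clique_triple_iff.2 ⟨adj hxy, adj hxz, adj hyz⟩)

theorem not_hasMonoK4_twoColoring (hne : red ≠ blue) (hG : G.IndepSetFree 4) :
    ¬ HasMonoK4 (twoColoring G red blue) red := by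
  rintro ⟨t, ht, hmono⟩
  refine hG t ⟨fun x hx y hy hxy hadj ↦ hne ?_, ht⟩
  exact (hmono hx hy hxy).symm.trans (if_pos hadj)

end TwoColoring

/-- The Wagner graph: the cycle on `Fin 8` together with its four long diagonals. -/
abbrev wagnerGraph : SimpleGraph (Fin 8) :=
  SimpleGraph.circulantGraph {1, 4}

theorem cliqueFree_three_wagnerGraph : wagnerGraph.CliqueFree 3 := by
  have key : ∀ x y z, wagnerGraph.Adj x y → wagnerGraph.Adj x z → ¬ wagnerGraph.Adj y z := by
    decide
  intro t ht
  obtain ⟨x, y, z, hxy, hxz, hyz, -⟩ := SimpleGraph.is3Clique_iff.1 ht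
  exact key x y z hxy hxz hyz

set_option synthInstance.maxSize 512 in
theorem indepSetFree_four_wagnerGraph : wagnerGraph.IndepSetFree 4 := by
  have key : ∀ x y z, wagnerGraphᶜ.Adj x y → wagnerGraphᶜ.Adj x z → wagnerGraphᶜ.Adj y z →
      ∀ w, ¬ (wagnerGraphᶜ.Adj x w ∧ wagnerGraphᶜ.Adj y w ∧ wagnerGraphᶜ.Adj z w) := by
    decide +kernel
  rw [← SimpleGraph.cliqueFree_compl, SimpleGraph.cliqueFree_iff]
  refine ⟨fun f ↦ ?_⟩
  have adj (i j : Fin 4) (hij : i ≠ j := by decide) : wagnerGraphᶜ.Adj (f i) (f j) :=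
    f.toHom.map_adj hij
  exact key _ _ _ (adj 0 1) (adj 0 2) (adj 1 2) _ ⟨adj 0 3, adj 1 3, adj 2 3⟩

theorem blowup_K8_general {α : Type*} [DecidableEq α] {n : ℕ} {S P Q : Finset α} {red blue : α}
    (hP : P ⊆ S) (hQ : Q ⊆ S) (hred : red ∉ S) (hblue : blue ∉ S) (hne : red ≠ blue)
    (h : ∃ c : Fin n → Fin n → α, IsSym c ∧
      (∀ u v : Fin n, u ≠ v → c u v ∈ S) ∧
      NoRainbowTriangle c ∧
      (∀ i ∈ P, ¬ HasMonoK4plus c i) ∧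
      (∀ i ∈ Q, ¬ HasMonoK3 c i)) :
    ∃ c : Fin (8 * n) → Fin (8 * n) → α, IsSym c ∧
      (∀ u v : Fin (8 * n), u ≠ v → c u v ∈ S ∪ {red, blue}) ∧
      NoRainbowTriangle c ∧
      (∀ i ∈ P ∪ {red}, ¬ HasMonoK4plus c i) ∧
      (∀ i ∈ Q ∪ {blue}, ¬ HasMonoK3 c i) := by
  obtain ⟨c, hcsym, hcmem, hc, hK4, hK3⟩ := h
  let d := twoColoring wagnerGraph red blue
  have hdsym : IsSym d := isSym_twoColoring _ _ _
  have hd (x y) : d x y = red ∨ d x y = blue := twoColoring_eq_or _ _ _ x y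
  have hdmem (x y) : d x y ∈ ({red, blue} : Finset α) := by simpa using hd x y
  have hdisj : Disjoint S {red, blue} := by simp [hred, hblue]
  have hc_ne {i} (hi : i ∉ S) (x y) (hxy : x ≠ y) : c x y ≠ i :=
    ne_of_mem_of_not_mem (hcmem x y hxy) hi
  have hd_ne {i} (hi : i ∈ S) (x y) (_ : x ≠ y) : d x y ≠ i :=
    ne_of_mem_of_not_mem (hdmem x y) (Finset.disjoint_left.1 hdisj hi)
  refine ⟨substitute d c, isSym_substitute hdsym hcsym, fun u v ↦ ?_,
    noRainbowTriangle_substitute hdsym (noRainbowTriangle_of_eq_or hd) hc,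
    fun i hi hK ↦ ?_, fun i hi hK ↦ ?_⟩
  · exact substitute_mem (S := {i | i ∈ S ∪ {red, blue}})
      (fun x y _ ↦ Finset.mem_union_right _ (hdmem x y))
      (fun x y hxy ↦ Finset.mem_union_left _ (hcmem x y hxy))
  · obtain hi | rfl := by simpa only [Finset.mem_union, Finset.mem_singleton] using hi
    · exact hK4 i hi (hK.inner_of_substitute (hd_ne (hP hi)))
    · exact not_hasMonoK4_twoColoring hne indepSetFree_four_wagnerGraph
        ((hK.hasMonoK4 (isSym_substitute hdsym hcsym)).outer_of_substitute (hc_ne hred))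
  · obtain hi | rfl := by simpa only [Finset.mem_union, Finset.mem_singleton] using hi
    · exact hK3 i hi (hK.inner_of_substitute (hd_ne (hQ hi)))
    · exact not_hasMonoK3_twoColoring hne cliqueFree_three_wagnerGraph
        (hK.outer_of_substitute (hc_ne hblue))

theorem blowup_K8 (k s n : ℕ) (hk : 1 ≤ k) (hs : s ≤ k) (hn : 1 ≤ n)
    (h : ∃ c : Fin n → Fin n → ℕ, IsSym c ∧
      (∀ u v : Fin n, u ≠ v → c u v ∈ Finset.Icc 1 k) ∧
      NoRainbowTriangle c ∧
      (∀ i ∈ Finset.Icc 1 s, ¬ HasMonoK4plus c i) ∧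
      (∀ i ∈ Finset.Icc (s + 1) k, ¬ HasMonoK3 c i)) :
    ∃ c : Fin (8 * n) → Fin (8 * n) → ℕ, IsSym c ∧
      (∀ u v : Fin (8 * n), u ≠ v → c u v ∈ Finset.Icc 1 (k + 2)) ∧
      NoRainbowTriangle c ∧
      (∀ i ∈ (Finset.Icc 1 s ∪ {k + 1} : Finset ℕ), ¬ HasMonoK4plus c i) ∧
      (∀ i ∈ (Finset.Icc (s + 1) k ∪ {k + 2} : Finset ℕ), ¬ HasMonoK3 c i) := by
  have palette : Finset.Icc 1 k ∪ {k + 1, k + 2} = Finset.Icc 1 (k + 2) := by grind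
  exact palette ▸ blowup_K8_general (Finset.Icc_subset_Icc_right hs)
    (Finset.Icc_subset_Icc_left (by lia)) (by simp) (by simp) (by simp) h
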